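/- arXiv:2105.01320 — 6 statements merged into one kernel-verified Lean document; each statement's English description precedes it below -/
import Mathlib

section
/- Let E be a finite-dimensional real normed vector space and let X ⊆ E \ {0} be a cross-section, i.e. a compact set such that for every x ∈ E \ {0} there exists a unique t > 0 with t • x ∈ X. Then the map Φ : (0, ∞) × X → E \ {0} defined by Φ(t, x) = t • x is a homeomorphism onto E \ {0}. -/
/-! The map `Φ (t, x) = t • x` is a continuous bijection by the definition of a cross-section: the
point over `y` is `(t⁻¹, t • y)`, where `t > 0` is the unique scalar with `t • y ∈ X`. It remains to
see that `Φ` is proper, hence closed. If `Φ (t, x) = t • x` converges to `y ≠ 0` along an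
ultrafilter, then `x` converges to some `a ∈ X` by compactness, and `a ≠ 0`; therefore
`t = ‖t • x‖ / ‖x‖` converges to `‖y‖ / ‖a‖ > 0`, so `(t, x)` converges in `(0, ∞) × X`. This
argument does not use local compactness of `E`. -/

open MeasureTheory Set Filter Topology

noncomputable section

variable {E : Type*} [NormedAddCommGroup E] [NormedSpace ℝ E]

/-- A compact set `X ⊆ E \ {0}` is a *cross-section* if every nonzero `x ∈ E`
admits a unique `t > 0` with `t • x ∈ X`. -/
def IsCrossSection (X : Set E) : Prop :=
  IsCompact X ∧ X ⊆ {(0 : E)}ᶜ ∧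
    ∀ x : E, x ≠ 0 → ∃! t : ℝ, 0 < t ∧ t • x ∈ X

/-- The scaling map `(t, x) ↦ t • x` from `(0, ∞) × X` to `E \ {0}`. -/
def scaleMap (X : Set E) (h0 : X ⊆ {(0 : E)}ᶜ) (p : ↥(Set.Ioi (0 : ℝ)) × ↥X) :
    ↥({(0 : E)}ᶜ : Set E) :=
  ⟨(p.1 : ℝ) • (p.2 : E), smul_ne_zero (ne_of_gt p.1.2) (h0 p.2.2)⟩

theorem continuous_scaleMap (X : Set E) (h0 : X ⊆ {(0 : E)}ᶜ) : Continuous (scaleMap X h0) := by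
  unfold scaleMap
  fun_prop

theorem bijective_scaleMap {X : Set E} (hX : IsCrossSection X) :
    Function.Bijective (scaleMap X hX.2.1) := by
  constructor
  · rintro ⟨⟨s, hs⟩, ⟨x, hx⟩⟩ ⟨⟨t, ht⟩, ⟨y, hy⟩⟩ h
    have hs' : 0 < s := hs
    have ht' : 0 < t := ht
    have h' : s • x = t • y := congrArg Subtype.val h
    -- Both `s⁻¹` and `t⁻¹` scale the common value `s • x = t • y` into `X`.
    have hst : s⁻¹ = t⁻¹ := (hX.2.2 (s • x) (smul_ne_zero hs'.ne' (hX.2.1 hx))).unique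
      ⟨inv_pos.2 hs', by rwa [inv_smul_smul₀ hs'.ne']⟩
      ⟨inv_pos.2 ht', by rwa [h', inv_smul_smul₀ ht'.ne']⟩
    obtain rfl := inv_injective hst
    obtain rfl := smul_right_injective E hs'.ne' h'
    rfl
  · rintro ⟨y, hy⟩
    obtain ⟨t, ⟨ht, hty⟩, -⟩ := hX.2.2 y hy
    exact ⟨(⟨t⁻¹, inv_pos.2 ht⟩, ⟨t • y, hty⟩), Subtype.ext (inv_smul_smul₀ ht.ne' y)⟩

theorem isProperMap_scaleMap {X : Set E} (hc : IsCompact X) (h0 : X ⊆ {(0 : E)}ᶜ) :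
    IsProperMap (scaleMap X h0) := by
  rw [isProperMap_iff_ultrafilter]
  refine ⟨continuous_scaleMap X h0, fun U y hy => ?_⟩
  have : CompactSpace X := isCompact_iff_compactSpace.1 hc
  obtain ⟨a, ha⟩ : ∃ a : X, Tendsto Prod.snd (U : Filter (Set.Ioi (0 : ℝ) × X)) (𝓝 a) :=
    ⟨_, (U.map Prod.snd).le_nhds_lim⟩
  have hane : ‖(a : E)‖ ≠ 0 := norm_ne_zero_iff.2 (h0 a.2)
  have hpos : 0 < ‖(y : E)‖ / ‖(a : E)‖ :=
    div_pos (norm_pos_iff.2 y.2) (norm_pos_iff.2 (h0 a.2))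
  have hdiv : Tendsto (fun p : Set.Ioi (0 : ℝ) × X => ‖(scaleMap X h0 p : E)‖ / ‖(p.2 : E)‖) U
      (𝓝 (‖(y : E)‖ / ‖(a : E)‖)) :=
    ((continuous_subtype_val.tendsto y).comp hy).norm.div
      ((continuous_subtype_val.tendsto a).comp ha).norm hane
  have ht : Tendsto Prod.fst (U : Filter (Set.Ioi (0 : ℝ) × X))
      (𝓝 ⟨‖(y : E)‖ / ‖(a : E)‖, hpos⟩) := by
    rw [tendsto_subtype_rng]
    refine hdiv.congr fun p => ?_
    have hp : 0 < (p.1 : ℝ) := p.1.2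
    have hx : ‖(p.2 : E)‖ ≠ 0 := norm_ne_zero_iff.2 (h0 p.2.2)
    simp only [scaleMap, norm_smul, Real.norm_of_nonneg hp.le]
    exact mul_div_cancel_right₀ _ hx
  have hU : Tendsto id (U : Filter (Set.Ioi (0 : ℝ) × X))
      (𝓝 (⟨‖(y : E)‖ / ‖(a : E)‖, hpos⟩, a)) := ht.prodMk_nhds ha
  exact ⟨_, tendsto_nhds_unique (((continuous_scaleMap X h0).tendsto _).comp hU) hy, hU⟩

/-- If `E` is a finite-dimensional real normed vector space and
`X ⊆ E \ {0}` is a cross-section, then `(t, x) ↦ t • x` is a homeomorphism from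
`(0, ∞) × X` onto `E \ {0}`. -/
theorem crossSection_polar_homeomorph
    [FiniteDimensional ℝ E] (X : Set E) (hX : IsCrossSection X) :
    ∃ H : (↥(Set.Ioi (0 : ℝ)) × ↥X) ≃ₜ ↥({(0 : E)}ᶜ : Set E),
      ∀ (t : ↥(Set.Ioi (0 : ℝ))) (x : ↥X), (H (t, x) : E) = (t : ℝ) • (x : E) := by
  exact ⟨(Equiv.ofBijective _ (bijective_scaleMap hX)).toHomeomorphOfContinuousClosed
    (continuous_scaleMap X hX.2.1) (isProperMap_scaleMap hX.1 hX.2.1).isClosedMap,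
    fun _ _ => rfl⟩
end
end

section
/- Let E be a finite-dimensional real normed vector space, d > 0 a real number, and μ a Borel measure on E that is finite on compact sets, satisfies μ({0}) = 0, and is homogeneous of degree d. Let X ⊆ E \ {0} be a cross-section. Then there exists a unique finite Borel measure n on X such that the pushforward, under the map (t, x) ↦ t • x from (0, ∞) × X to E \ {0}, of the product of the measure on (0, ∞) with density t^{d−1} with respect to Lebesgue measure and the measure n, equals the restriction of μ to E \ {0}. -/
/-!
Every nonzero vector is uniquely `t • x` with `t > 0` and `x ∈ X`, so `(t, x) ↦ t • x` is a
continuous injection from the Polish space `(0, ∞) × X` onto `E \ {0}`; by the Lusin–Souslin theorem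
it is a measurable embedding. Hence `μ` restricted to `E \ {0}` corresponds to a measure on
`(0, ∞) × X`, and the point is to recognise it as a product.

For measurable `A ⊆ X` let `truncCone r A` be the set of all `t • x` with `0 < t < r`, `x ∈ A`. It is
`r • truncCone 1 A`, so by homogeneity its measure is `r ^ d * μ (truncCone 1 A)`, while
`radialMeasure d` gives `(0, r)` the mass `r ^ d / d`. Setting `n A = d * μ (truncCone 1 A)` the two
measures agree on all rectangles `(0, r) × A`; these form a π-system generating the product
σ-algebra, which gives existence. The measure `n` is finite because `truncCone 1 X` is bounded.
Conversely, evaluating the defining identity on `truncCone 1 A` forces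
`(1 / d) * n A = μ (truncCone 1 A)`, which gives uniqueness.
-/


open MeasureTheory Set Filter Topology Pointwise

noncomputable section

variable {E : Type*} [NormedAddCommGroup E] [NormedSpace ℝ E]

/-- A Borel measure `μ` on `E` is *homogeneous of degree `d`* if
`μ(t • A) = t ^ d * μ(A)` for all `t > 0` and all Borel sets `A`. -/
def IsHomogeneousMeasure [MeasurableSpace E] (μ : Measure E) (d : ℝ) : Prop :=
  ∀ t : ℝ, 0 < t → ∀ A : Set E, MeasurableSet A →
    μ (t • A) = ENNReal.ofReal (t ^ d) * μ A

/-- The measure `t ^ (d-1) dt` on `(0, ∞)`. -/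
def radialMeasure (d : ℝ) : Measure ℝ :=
  (volume.restrict (Set.Ioi (0 : ℝ))).withDensity fun t => ENNReal.ofReal (t ^ (d - 1))

/-- `n` is a *polar measure* for `μ` on the cross-section `X` if `n` is a finite
Borel measure on `X` such that the pushforward under `(t, x) ↦ t • x` of the
product of `t ^ (d-1) dt` on `(0, ∞)` with `n` is the restriction of `μ` to
`E \ {0}`. -/
def IsPolarMeasure [MeasurableSpace E] (μ : Measure E) (d : ℝ) (X : Set E)
    (n : Measure X) : Prop :=
  IsFiniteMeasure n ∧
    Measure.map (fun p : ℝ × X => p.1 • (p.2 : E)) ((radialMeasure d).prod n)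
      = μ.restrict {(0 : E)}ᶜ

/-- The cone over `A ⊆ X` truncated to radial parameters in the open interval `(0, r)`. -/
def truncCone {X : Set E} (r : ℝ) (A : Set X) : Set E :=
  (fun p : ℝ × X => p.1 • (p.2 : E)) '' (Ioo 0 r ×ˢ A)

lemma truncCone_eq_smul {X : Set E} {r : ℝ} (hr : 0 < r) (A : Set X) :
    truncCone r A = r • truncCone 1 A := by
  ext y
  simp only [truncCone, mem_image, mem_prod, Prod.exists, mem_Ioo, mem_smul_set]
  constructor
  · rintro ⟨t, x, ⟨⟨h0, h1⟩, hx⟩, rfl⟩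
    refine ⟨(t / r) • (x : E), ⟨t / r, x, ⟨⟨by positivity, ?_⟩, hx⟩, rfl⟩, ?_⟩
    · rwa [div_lt_one hr]
    · rw [smul_smul, mul_div_cancel₀ _ hr.ne']
  · rintro ⟨_, ⟨t, x, ⟨⟨h0, h1⟩, hx⟩, rfl⟩, rfl⟩
    refine ⟨r * t, x, ⟨⟨by positivity, ?_⟩, hx⟩, ?_⟩
    · nlinarith
    · rw [smul_smul]

lemma truncCone_one_subset_closedBall {X : Set E} (hX : IsCompact X) :
    ∃ R : ℝ, truncCone 1 (univ : Set X) ⊆ Metric.closedBall 0 R := by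
  obtain ⟨R, hR⟩ := hX.isBounded.exists_norm_le
  refine ⟨R, ?_⟩
  rintro _ ⟨⟨t, x⟩, ⟨⟨h0, h1⟩, -⟩, rfl⟩
  have hx := hR x x.2
  simp only [mem_closedBall_zero_iff, norm_smul, Real.norm_eq_abs, abs_of_pos h0]
  nlinarith [norm_nonneg (x : E)]

lemma radialMeasure_Iio {d : ℝ} (hd : 0 < d) {r : ℝ} (hr : 0 ≤ r) :
    radialMeasure d (Iio r) = ENNReal.ofReal (r ^ d / d) := by
  have hint : IntervalIntegrable (fun t : ℝ => t ^ (d - 1)) volume 0 r :=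
    intervalIntegral.intervalIntegrable_rpow' (by linarith)
  rw [radialMeasure, withDensity_apply _ measurableSet_Iio,
    Measure.restrict_restrict measurableSet_Iio, Iio_inter_Ioi,
    Measure.restrict_congr_set Ioo_ae_eq_Ioc, ← ofReal_integral_eq_lintegral_ofReal hint.1,
    ← intervalIntegral.integral_of_le hr, integral_rpow (Or.inl (by linarith))]
  · simp [Real.zero_rpow hd.ne']
  · filter_upwards [ae_restrict_mem measurableSet_Ioc] with t ht
    exact Real.rpow_nonneg ht.1.le _

lemma radialMeasure_Iic_zero (d : ℝ) : radialMeasure d (Iic 0) = 0 := by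
  rw [radialMeasure]
  refine withDensity_absolutelyContinuous _ _ ?_
  rw [Measure.restrict_apply measurableSet_Iic, Iic_inter_Ioi, Ioc_self, measure_empty]

/-- The half-lines `(-∞, k + 1)` have finite radial measure and exhaust `ℝ`. -/
def radialSpanningSets {d : ℝ} (hd : 0 < d) :
    (radialMeasure d).FiniteSpanningSetsIn (range Iio) where
  set k := Iio ((k : ℝ) + 1)
  set_mem _ := mem_range_self _
  finite k := by
    rw [radialMeasure_Iio hd (by positivity)]
    exact ENNReal.ofReal_lt_top
  spanning := iUnion_eq_univ_iff.2 fun x => ⟨⌊x⌋₊, Nat.lt_floor_add_one x⟩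

lemma sigmaFinite_radialMeasure {d : ℝ} (hd : 0 < d) : SigmaFinite (radialMeasure d) :=
  (radialSpanningSets hd).sigmaFinite

/-- The polar coordinate map `(t, x) ↦ t • x` on `(0, ∞) × X`. -/
def polarMap (X : Set E) (p : Ioi (0 : ℝ) × X) : E := (p.1 : ℝ) • (p.2 : E)

lemma polarMap_injective {X : Set E} (hX : IsCrossSection X) :
    Function.Injective (polarMap X) := by
  rintro ⟨⟨t, ht⟩, x⟩ ⟨⟨s, hs⟩, y⟩ h
  simp only [mem_Ioi] at ht hs
  have h' : t • (x : E) = s • (y : E) := h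
  have hx : (x : E) ≠ 0 := hX.2.1 x.2
  -- Both `1` and `t / s` bring `x` into `X`.
  have h1 : (t / s) • (x : E) = y := by
    rw [div_eq_inv_mul, mul_smul, h', smul_smul, inv_mul_cancel₀ hs.ne', one_smul]
  have h2 : t / s = 1 := (hX.2.2 x hx).unique ⟨by positivity, by rw [h1]; exact y.2⟩
    ⟨one_pos, by rw [one_smul]; exact x.2⟩
  have h3 : t = s := by rwa [div_eq_one_iff_eq hs.ne'] at h2
  rw [h2, one_smul] at h1
  simp [h3, Subtype.ext h1]

lemma range_polarMap {X : Set E} (hX : IsCrossSection X) :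
    range (polarMap X) = {(0 : E)}ᶜ := by
  ext y
  constructor
  · rintro ⟨⟨t, x⟩, rfl⟩
    exact smul_ne_zero (ne_of_gt t.2) (hX.2.1 x.2)
  · intro hy
    obtain ⟨t, ⟨ht, htX⟩, -⟩ := hX.2.2 y hy
    refine ⟨(⟨t⁻¹, inv_pos.2 ht⟩, ⟨t • y, htX⟩), ?_⟩
    simp [polarMap, smul_smul, inv_mul_cancel₀ ht.ne']

lemma image_polarMap {X : Set E} (r : ℝ) (A : Set X) :
    polarMap X '' {p | (p.1 : ℝ) < r ∧ p.2 ∈ A} = truncCone r A := by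
  ext y
  constructor
  · rintro ⟨⟨t, x⟩, ⟨h1, h2⟩, rfl⟩
    exact ⟨(t, x), ⟨⟨t.2, h1⟩, h2⟩, rfl⟩
  · rintro ⟨⟨t, x⟩, ⟨⟨h0, h1⟩, h2⟩, rfl⟩
    exact ⟨(⟨t, h0⟩, x), ⟨h1, h2⟩, rfl⟩

section Measure

variable [FiniteDimensional ℝ E] [MeasurableSpace E] [BorelSpace E]

/-- The Lusin–Souslin theorem applied to the continuous injection `polarMap X`. -/
lemma measurableEmbedding_polarMap {X : Set E} (hX : IsCrossSection X) :
    MeasurableEmbedding (polarMap X) := by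
  have : ProperSpace E := FiniteDimensional.proper ℝ E
  have : StandardBorelSpace X := hX.1.measurableSet.standardBorel
  have : StandardBorelSpace (Ioi (0 : ℝ)) := measurableSet_Ioi.standardBorel
  refine Measurable.measurableEmbedding ?_ (polarMap_injective hX)
  exact Continuous.measurable (by unfold polarMap; fun_prop)

lemma measurableSet_trunc {X : Set E} (r : ℝ) {A : Set X} (hA : MeasurableSet A) :
    MeasurableSet {p : Ioi (0 : ℝ) × X | (p.1 : ℝ) < r ∧ p.2 ∈ A} :=
  have h : Measurable fun p : Ioi (0 : ℝ) × X => (p.1 : ℝ) := by fun_prop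
  (h measurableSet_Iio).inter (measurable_snd hA)

lemma measurableSet_truncCone {X : Set E} (hX : IsCrossSection X) (r : ℝ) {A : Set X}
    (hA : MeasurableSet A) : MeasurableSet (truncCone r A) := by
  rw [← image_polarMap]
  exact (measurableEmbedding_polarMap hX).measurableSet_image.2 (measurableSet_trunc r hA)

lemma measurable_smul_coe (X : Set E) : Measurable fun p : ℝ × X => p.1 • (p.2 : E) :=
  have : ProperSpace E := FiniteDimensional.proper ℝ E
  Continuous.measurable (by fun_prop)

/-- The defining identity of a polar measure, evaluated on a truncated cone of radius `1`. -/
lemma IsPolarMeasure.radial_mul_apply {μ : Measure E} {d : ℝ} (hd : 0 < d) {X : Set E}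
    (hX : IsCrossSection X) {n : Measure X} (hn : IsPolarMeasure μ d X n) {A : Set X}
    (hA : MeasurableSet A) :
    radialMeasure d (Iio 1) * n A = μ (truncCone 1 A) := by
  have := hn.1
  have := sigmaFinite_radialMeasure hd
  have hC := measurableSet_truncCone hX 1 hA
  have hsub : truncCone 1 A ⊆ {(0 : E)}ᶜ := by
    rw [← range_polarMap hX, ← image_polarMap]
    exact image_subset_range _ _
  rw [← inter_eq_left.2 hsub, ← Measure.restrict_apply hC, ← hn.2,
    Measure.map_apply (measurable_smul_coe X) hC, ← Measure.prod_prod]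
  -- The preimage and the rectangle agree over `(0, ∞)`, and the rest is null.
  have hnull : ∀ᵐ p ∂(radialMeasure d).prod n, 0 < p.1 := by
    have h0 : ∀ᵐ t ∂radialMeasure d, 0 < t := by
      rw [ae_iff]
      simpa [Iic_def] using radialMeasure_Iic_zero d
    exact Measure.quasiMeasurePreserving_fst.ae h0
  refine measure_congr ?_
  filter_upwards [hnull] with p hp
  refine propext ⟨fun h => ⟨p, ⟨⟨hp, h.1⟩, h.2⟩, rfl⟩, ?_⟩
  rintro ⟨q, ⟨⟨hq0, hq1⟩, hqA⟩, hqp⟩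
  have hinj := polarMap_injective hX (a₁ := (⟨q.1, hq0⟩, q.2)) (a₂ := (⟨p.1, hp⟩, p.2)) hqp
  obtain ⟨ht, hx⟩ := Prod.mk.inj hinj
  exact ⟨Subtype.mk.inj ht ▸ hq1, hx ▸ hqA⟩

/-- The candidate polar measure `A ↦ d * μ (truncCone 1 A)`. -/
def polarMeasure (μ : Measure E) (d : ℝ) (X : Set E) : Measure X :=
  ENNReal.ofReal d • ((μ.comap (polarMap X)).restrict {p | (p.1 : ℝ) < 1}).snd

lemma polarMeasure_apply (μ : Measure E) (d : ℝ) {X : Set E} (hX : IsCrossSection X)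
    {A : Set X} (hA : MeasurableSet A) :
    polarMeasure μ d X A = ENNReal.ofReal d * μ (truncCone 1 A) := by
  rw [polarMeasure, Measure.smul_apply, Measure.snd_apply hA,
    Measure.restrict_apply (measurable_snd hA), (measurableEmbedding_polarMap hX).comap_apply,
    smul_eq_mul, ← image_polarMap, inter_comm]
  rfl

lemma isFiniteMeasure_polarMeasure (μ : Measure E) [IsFiniteMeasureOnCompacts μ] (d : ℝ)
    {X : Set E} (hX : IsCrossSection X) : IsFiniteMeasure (polarMeasure μ d X) := by
  have : ProperSpace E := FiniteDimensional.proper ℝ E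
  obtain ⟨R, hR⟩ := truncCone_one_subset_closedBall hX.1
  refine ⟨?_⟩
  rw [polarMeasure_apply μ d hX .univ]
  exact ENNReal.mul_lt_top ENNReal.ofReal_lt_top
    ((measure_mono hR).trans_lt (isCompact_closedBall 0 R).measure_lt_top)

/-- In polar coordinates `μ` is a product: the two measures agree on the rectangles
`(-∞, r) × A`. -/
lemma radialMeasure_prod_polarMeasure {μ : Measure E} [IsFiniteMeasureOnCompacts μ] {d : ℝ}
    (hd : 0 < d) (hhom : IsHomogeneousMeasure μ d) {X : Set E} (hX : IsCrossSection X) :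
    (radialMeasure d).prod (polarMeasure μ d X) =
      (μ.comap (polarMap X)).map (Prod.map Subtype.val id) := by
  have := isFiniteMeasure_polarMeasure μ d hX
  refine Measure.prod_eq_generateFrom
    ((borel_eq_generateFrom_Iio ℝ).symm.trans BorelSpace.measurable_eq.symm)
    MeasurableSpace.generateFrom_measurableSet isPiSystem_Iio
    MeasurableSpace.isPiSystem_measurableSet
    (radialSpanningSets hd) (polarMeasure μ d X).toFiniteSpanningSetsIn ?_
  rintro _ ⟨r, rfl⟩ A (hA : MeasurableSet A)
  have hpre : Prod.map Subtype.val id ⁻¹' (Iio r ×ˢ A) =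
      {p : Ioi (0 : ℝ) × X | (p.1 : ℝ) < r ∧ p.2 ∈ A} := rfl
  rw [Measure.map_apply (by fun_prop) (measurableSet_Iio.prod hA), hpre,
    (measurableEmbedding_polarMap hX).comap_apply, image_polarMap, polarMeasure_apply μ d hX hA]
  rcases le_or_gt r 0 with hr | hr
  · have h0 : radialMeasure d (Iio r) = 0 :=
      measure_mono_null (Iio_subset_Iic hr) (radialMeasure_Iic_zero d)
    simp [h0, truncCone, Ioo_eq_empty hr.not_gt]
  · rw [truncCone_eq_smul hr, hhom r hr _ (measurableSet_truncCone hX 1 hA),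
      radialMeasure_Iio hd hr.le, ← mul_assoc, ← ENNReal.ofReal_mul (by positivity),
      div_mul_cancel₀ _ hd.ne']

lemma isPolarMeasure_polarMeasure {μ : Measure E} [IsFiniteMeasureOnCompacts μ] {d : ℝ}
    (hd : 0 < d) (hhom : IsHomogeneousMeasure μ d) {X : Set E} (hX : IsCrossSection X) :
    IsPolarMeasure μ d X (polarMeasure μ d X) := by
  refine ⟨isFiniteMeasure_polarMeasure μ d hX, ?_⟩
  rw [radialMeasure_prod_polarMeasure hd hhom hX,
    Measure.map_map (measurable_smul_coe X) (by fun_prop), ← range_polarMap hX,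
    ← (measurableEmbedding_polarMap hX).map_comap]
  rfl
end Measure

/-- (Polar coordinates, Lemma 3.1 of the paper.) If `μ` is a
Borel measure on a finite-dimensional real normed space `E`, finite on compact
sets, null at `0`, and homogeneous of degree `d > 0`, and `X ⊆ E \ {0}` is a
cross-section, then there is a unique finite measure `n` on `X` such that the
map `(t, x) ↦ t • x` pushes `t ^ (d-1) dt ⊗ n` to `μ` restricted to `E \ {0}`. -/
theorem exists_unique_polar_measure
    [FiniteDimensional ℝ E] [MeasurableSpace E] [BorelSpace E]
    (d : ℝ) (hd : 0 < d) (μ : Measure E) [IsFiniteMeasureOnCompacts μ]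
    (hzero : μ {(0 : E)} = 0) (hhom : IsHomogeneousMeasure μ d)
    (X : Set E) (hX : IsCrossSection X) :
    ∃! n : Measure X, IsPolarMeasure μ d X n := by
  refine ⟨polarMeasure μ d X, isPolarMeasure_polarMeasure hd hhom hX, fun n hn => ?_⟩
  have h1 : radialMeasure d (Iio 1) = ENNReal.ofReal (1 / d) := by
    rw [radialMeasure_Iio hd zero_le_one, Real.one_rpow]
  ext A hA
  rw [polarMeasure_apply μ d hX hA, ← hn.radial_mul_apply hd hX hA, h1, ← mul_assoc,
    ← ENNReal.ofReal_mul hd.le, mul_one_div_cancel hd.ne', ENNReal.ofReal_one, one_mul]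
end
end

section
/- Let E be a finite-dimensional real normed vector space, d > 0, μ a Borel measure on E that is finite on compact sets, satisfies μ({0}) = 0, and is homogeneous of degree d, X ⊆ E \ {0} a cross-section, and n the polar measure of μ on X. Then for every Borel set U ⊆ X one has n(U) = lim_{t → 1⁺} μ({s • x : s ∈ [1, t], x ∈ U}) / (t − 1). -/
/-!
The map `(s, x) ↦ s • x` is injective on `(0, ∞) × X`, because `X` meets each ray from the origin
exactly once (`IsCrossSection.injOn_smul`). Hence, up to a null set, the preimage of the truncated
cone `{s • x : s ∈ [1, t], x ∈ U}` is the rectangle `[1, t] × U`, and the polar decomposition gives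

  `μ {s • x : s ∈ [1, t], x ∈ U} = (∫ s in 1..t, s ^ (d - 1)) * n U`

(`IsPolarMeasure.measure_cone`). The cone is Borel by the Lusin–Souslin theorem. After division by
`t - 1`, the integral tends to its derivative at `t = 1`, which is `1 ^ (d - 1) = 1`.
-/

open MeasureTheory Set Filter Topology Pointwise

noncomputable section

variable {E : Type*} [NormedAddCommGroup E] [NormedSpace ℝ E]

theorem IsCrossSection.injOn_smul {X : Set E} (hX : IsCrossSection X) :
    Set.InjOn (fun p : ℝ × X => p.1 • (p.2 : E)) (Ioi (0 : ℝ) ×ˢ univ) := by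
  rintro ⟨s, x⟩ hs ⟨s', x'⟩ hs' h
  have hs0 : 0 < s := hs.1
  have hs0' : 0 < s' := hs'.1
  have h : s • (x : E) = s' • (x' : E) := h
  have hx : s • (x : E) ≠ 0 := smul_ne_zero hs0.ne' (hX.2.1 x.2)
  have e1 : s⁻¹ • s • (x : E) = x := inv_smul_smul₀ hs0.ne' _
  have e2 : s'⁻¹ • s • (x : E) = x' := by rw [h, inv_smul_smul₀ hs0'.ne']
  have hinv : s⁻¹ = s'⁻¹ := (hX.2.2 _ hx).unique
    ⟨inv_pos.2 hs0, by rw [e1]; exact x.2⟩ ⟨inv_pos.2 hs0', by rw [e2]; exact x'.2⟩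
  have hss : s = s' := inv_injective hinv
  have hxx : x = x' := Subtype.ext (by rw [← e1, ← e2, hinv])
  rw [hss, hxx]

theorem radialMeasure_Icc (d : ℝ) {t : ℝ} (ht : 1 ≤ t) :
    (radialMeasure d (Icc 1 t)).toReal = ∫ s in (1 : ℝ)..t, s ^ (d - 1) := by
  have hsub : Icc 1 t ⊆ Ioi (0 : ℝ) := fun s hs => lt_of_lt_of_le one_pos hs.1
  rw [radialMeasure, withDensity_apply _ measurableSet_Icc,
    Measure.restrict_restrict measurableSet_Icc, inter_eq_self_of_subset_left hsub,
    intervalIntegral.integral_of_le ht, ← integral_Icc_eq_integral_Ioc,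
    integral_eq_lintegral_of_nonneg_ae]
  · filter_upwards [ae_restrict_mem measurableSet_Icc] with s hs
    exact Real.rpow_nonneg (hsub hs).le _
  · exact (by fun_prop : Measurable fun s : ℝ => s ^ (d - 1)).aestronglyMeasurable

theorem ae_radialMeasure_pos (d : ℝ) : ∀ᵐ s ∂radialMeasure d, s ∈ Ioi (0 : ℝ) :=
  (withDensity_absolutelyContinuous _ _).ae_le (ae_restrict_mem measurableSet_Ioi)

/-- The truncated cone over `U` has the mass of the rectangle `[1, t] × U` in polar coordinates. -/
theorem IsPolarMeasure.measure_cone [FiniteDimensional ℝ E] [MeasurableSpace E] [BorelSpace E]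
    {d : ℝ} {μ : Measure E} {X : Set E} (hX : IsCrossSection X) {n : Measure X}
    (hn : IsPolarMeasure μ d X n) {U : Set X} (hU : MeasurableSet U) (t : ℝ) :
    μ {y : E | ∃ s ∈ Set.Icc (1 : ℝ) t, ∃ x ∈ U, y = s • (x : E)}
      = radialMeasure d (Icc 1 t) * n U := by
  obtain ⟨hfin, hmap⟩ := hn
  have : ProperSpace E := FiniteDimensional.proper_real E
  have : StandardBorelSpace X := hX.1.measurableSet.standardBorel
  set f : ℝ × X → E := fun p => p.1 • (p.2 : E) with hf
  have hfm : Measurable f := by fun_prop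
  set A : Set E := {y : E | ∃ s ∈ Set.Icc (1 : ℝ) t, ∃ x ∈ U, y = s • (x : E)} with hA
  have hsub : Icc 1 t ×ˢ U ⊆ Ioi (0 : ℝ) ×ˢ (univ : Set X) :=
    fun p hp => ⟨lt_of_lt_of_le one_pos hp.1.1, mem_univ _⟩
  have hAf : A = f '' (Icc 1 t ×ˢ U) := by
    ext y
    constructor
    · rintro ⟨s, hs, x, hx, rfl⟩
      exact ⟨(s, x), ⟨hs, hx⟩, rfl⟩
    · rintro ⟨⟨s, x⟩, ⟨hs, hx⟩, rfl⟩
      exact ⟨s, hs, x, hx, rfl⟩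
  have hAm : MeasurableSet A := by
    rw [hAf]
    exact (measurableSet_Icc.prod hU).image_of_measurable_injOn hfm (hX.injOn_smul.mono hsub)
  have hA0 : A ⊆ {(0 : E)}ᶜ := by
    rintro y ⟨s, hs, x, -, rfl⟩
    exact smul_ne_zero (one_pos.trans_le hs.1).ne' (hX.2.1 x.2)
  rw [← Measure.restrict_eq_self μ hA0, ← hmap, Measure.map_apply hfm hAm, ← Measure.prod_prod]
  apply measure_congr
  have hpos : ∀ᵐ p ∂(radialMeasure d).prod n, p.1 ∈ Ioi (0 : ℝ) :=
    Measure.quasiMeasurePreserving_fst.ae (ae_radialMeasure_pos d)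
  -- Negative `s` may also send points of `X` into the cone, so the sets agree only for `s > 0`.
  filter_upwards [hpos] with p hp
  apply propext
  change f p ∈ A ↔ p ∈ Icc 1 t ×ˢ U
  rw [hAf]
  exact hX.injOn_smul.mem_image_iff hsub ⟨hp, mem_univ _⟩

/-- For the polar measure `n` of `μ` on a cross-section `X`,
the `n`-measure of a Borel set `U ⊆ X` is recovered as
`n(U) = lim_{t → 1⁺} μ({s • x : s ∈ [1, t], x ∈ U}) / (t - 1)`. -/
theorem polarMeasure_eq_limit
    [FiniteDimensional ℝ E] [MeasurableSpace E] [BorelSpace E]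
    (d : ℝ) (hd : 0 < d) (μ : Measure E) [IsFiniteMeasureOnCompacts μ]
    (hzero : μ {(0 : E)} = 0) (hhom : IsHomogeneousMeasure μ d)
    (X : Set E) (hX : IsCrossSection X)
    (n : Measure X) (hn : IsPolarMeasure μ d X n)
    (U : Set X) (hU : MeasurableSet U) :
    Tendsto
      (fun t : ℝ =>
        (μ {y : E | ∃ s ∈ Set.Icc (1 : ℝ) t, ∃ x ∈ U, y = s • (x : E)}).toReal / (t - 1))
      (𝓝[>] (1 : ℝ)) (𝓝 (n U).toReal) := by
  have hderiv : HasDerivAt (fun t : ℝ => ∫ s in (1 : ℝ)..t, s ^ (d - 1)) 1 1 := by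
    have hc : ContinuousAt (fun s : ℝ => s ^ (d - 1)) 1 :=
      Real.continuousAt_rpow_const _ _ (Or.inl one_ne_zero)
    have h := intervalIntegral.integral_hasDerivAt_right (a := 1) (b := 1)
      (f := fun s : ℝ => s ^ (d - 1)) (by simp)
      (by fun_prop : Measurable fun s : ℝ => s ^ (d - 1)).stronglyMeasurable.stronglyMeasurableAtFilter hc
    simpa using h
  have hslope := (hasDerivAt_iff_tendsto_slope.1 hderiv).mono_left
    (nhdsWithin_mono (1 : ℝ) fun t (ht : 1 < t) => ht.ne')
  have hlim := hslope.mul_const (n U).toReal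
  rw [one_mul] at hlim
  refine hlim.congr' ?_
  filter_upwards [self_mem_nhdsWithin] with t ht
  rw [hn.measure_cone hX hU, ENNReal.toReal_mul, radialMeasure_Icc d (le_of_lt ht), slope_def_field,
    intervalIntegral.integral_same, sub_zero]
  ring
end
end

section
/- Let E be a finite-dimensional real normed vector space, d > 0, μ a Borel measure on E that is finite on compact sets, satisfies μ({0}) = 0, and is homogeneous of degree d, and let F : E → ℝ be a positive 1-homogeneous function. Let n_F be the polar measure of μ on the cross-section X_F = F⁻¹({1}). Then for every real number k ≥ 0 one has ∫_{{x : F(x) ≤ 1}} F(x)^k dμ(x) = n_F(X_F) / (d + k). -/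
/-!
Since `μ {0} = 0`, the measure `μ` is the pushforward of `radialMeasure d × n` under
`(t, x) ↦ t • x`. On the cross-section `F = 1`, so `F (t • x) = t` for `t > 0`, and the integral
becomes the product of `n univ` with `∫₀¹ t ^ k * t ^ (d - 1) dt = 1 / (d + k)`
(`integral_radialMeasure`).
-/

open MeasureTheory Set Filter Topology Pointwise

noncomputable section

variable {E : Type*} [NormedAddCommGroup E] [NormedSpace ℝ E]

/-- A function `F : E → ℝ` is a *positive 1-homogeneous function* if it is
continuous, positive away from `0`, and satisfies `F (t • x) = t * F x` for all
`t > 0`. -/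
def IsPosHomogeneousFn (F : E → ℝ) : Prop :=
  Continuous F ∧ (∀ x : E, x ≠ 0 → 0 < F x) ∧
    ∀ t : ℝ, 0 < t → ∀ x : E, F (t • x) = t * F x

instance (d : ℝ) : SFinite (radialMeasure d) := by
  unfold radialMeasure; infer_instance

lemma ae_radialMeasure_pos_s4 (d : ℝ) : ∀ᵐ t ∂(radialMeasure d), 0 < t :=
  (withDensity_absolutelyContinuous _ _).ae_le (ae_restrict_mem measurableSet_Ioi)

/-- The radial factor: `∫₀¹ t ^ k * t ^ (d - 1) dt = 1 / (d + k)`. -/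
lemma integral_radialMeasure {d k : ℝ} (hd : 0 < d) (hk : 0 ≤ k) :
    ∫ t, (Iic (1 : ℝ)).indicator (fun t => t ^ k) t ∂(radialMeasure d) = 1 / (d + k) := by
  unfold radialMeasure
  rw [integral_withDensity_eq_integral_toReal_smul (by fun_prop) (by simp)]
  have h : ∀ t ∈ Ioi (0 : ℝ), (ENNReal.ofReal (t ^ (d - 1))).toReal •
      (Iic (1 : ℝ)).indicator (fun t => t ^ k) t
      = (Iic (1 : ℝ)).indicator (fun t => t ^ (d + k - 1)) t := by
    intro t ht
    rw [ENNReal.toReal_ofReal (Real.rpow_nonneg (le_of_lt ht) _)]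
    by_cases h1 : t ≤ 1
    · simp only [indicator_apply, mem_Iic, h1, if_true, smul_eq_mul]
      rw [← Real.rpow_add ht]
      ring_nf
    · simp [h1]
  rw [setIntegral_congr_fun measurableSet_Ioi h, setIntegral_indicator measurableSet_Iic,
    Ioi_inter_Iic, ← intervalIntegral.integral_of_le zero_le_one,
    integral_rpow (Or.inl (by linarith))]
  have h0 : d + k ≠ 0 := by positivity
  simp [h0]

/-- (Equation (3.2) of the paper.) If `n_F` is the polar
measure of `μ` on the cross-section `X_F = F⁻¹({1})` of a positive
1-homogeneous function `F`, then for every `k ≥ 0`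
`∫_{F ≤ 1} F^k dμ = n_F(X_F) / (d + k)`. -/
theorem integral_pow_of_polarMeasure
    [FiniteDimensional ℝ E] [MeasurableSpace E] [BorelSpace E]
    (d : ℝ) (hd : 0 < d) (μ : Measure E) [IsFiniteMeasureOnCompacts μ]
    (hzero : μ {(0 : E)} = 0) (hhom : IsHomogeneousMeasure μ d)
    (F : E → ℝ) (hF : IsPosHomogeneousFn F)
    (n : Measure (F ⁻¹' {1} : Set E)) (hn : IsPolarMeasure μ d (F ⁻¹' {1}) n)
    (k : ℝ) (hk : 0 ≤ k) :
    ∫ x in {x : E | F x ≤ 1}, F x ^ k ∂μ = (n Set.univ).toReal / (d + k) := by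
  obtain ⟨hnfin, hmap⟩ := hn
  haveI := FiniteDimensional.proper_real E
  have hμ : μ.restrict {(0 : E)}ᶜ = μ :=
    Measure.restrict_eq_self_of_ae_mem (compl_mem_ae_iff.mpr hzero)
  rw [hμ] at hmap
  have hg : Measurable fun p : ℝ × (F ⁻¹' {1} : Set E) => p.1 • (p.2 : E) :=
    measurable_fst.smul measurable_snd.subtype_val
  have hFm : Measurable F := hF.1.measurable
  have hS : MeasurableSet {x : E | F x ≤ 1} := measurableSet_le hFm measurable_const
  have hfm : Measurable ({x : E | F x ≤ 1}.indicator fun x => F x ^ k) :=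
    (hFm.pow_const k).indicator hS
  -- In polar coordinates `F (t • x) = t`, so the integrand depends on `t` only.
  have hae : ∀ᵐ p ∂((radialMeasure d).prod n),
      ({x : E | F x ≤ 1}.indicator fun x => F x ^ k) (p.1 • (p.2 : E))
        = (Iic (1 : ℝ)).indicator (fun t => t ^ k) p.1 := by
    filter_upwards [Measure.quasiMeasurePreserving_fst.ae (ae_radialMeasure_pos_s4 d)] with p hp
    have hFp : F (p.1 • (p.2 : E)) = p.1 := by
      have h1 : F (p.2 : E) = 1 := p.2.2
      rw [hF.2.2 p.1 hp, h1, mul_one]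
    simp [indicator_apply, hFp]
  rw [← integral_indicator hS]
  conv_lhs => rw [← hmap]
  rw [integral_map hg.aemeasurable hfm.aestronglyMeasurable, integral_congr_ae hae,
    integral_fun_fst, integral_radialMeasure hd hk, smul_eq_mul, Measure.real, mul_one_div]
end
end

section
/- Let E be a finite-dimensional real normed vector space, d > 0, μ a Borel measure on E that is finite on compact sets, satisfies μ({0}) = 0, and is homogeneous of degree d, and let F : E → ℝ be a positive 1-homogeneous function. Then μ({x : F(x) ≤ 1}) is finite and for every real number k ≥ 0 one has ∫_{{x : F(x) ≤ 1}} F(x)^k dμ(x) = (d/(d + k)) · μ({x ∈ E : F(x) ≤ 1}). -/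
/-!
The sublevel set `S = {F ≤ 1}` is compact: `F` is bounded below by some `m > 0` on the unit sphere,
so `F x ≥ m ‖x‖` for all `x` by homogeneity, and hence `S` is bounded. As
`{F ≤ r} = r • S` for `r > 0`, homogeneity of `μ` gives `μ {F ≤ r} = r ^ d * μ S`.
For `k > 0` the layer cake formula then yields
`∫_S F ^ k dμ = ∫_0^1 μ {x ∈ S | s < F x ^ k} ds = ∫_0^1 (1 - s ^ (d / k)) ds * μ S`,
and the last integral equals `d / (d + k)`. For `k = 0` both sides are `μ S`.
-/

open MeasureTheory Set Filter Topology Pointwise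

noncomputable section

variable {E : Type*} [NormedAddCommGroup E] [NormedSpace ℝ E]

namespace IsPosHomogeneousFn

lemma map_zero {F : E → ℝ} (hF : IsPosHomogeneousFn F) : F 0 = 0 := by
  have h := hF.2.2 2 two_pos 0
  rw [smul_zero] at h
  linarith

lemma nonneg {F : E → ℝ} (hF : IsPosHomogeneousFn F) (x : E) : 0 ≤ F x := by
  rcases eq_or_ne x 0 with rfl | hx
  · exact hF.map_zero.ge
  · exact (hF.2.1 x hx).le

lemma exists_mul_norm_le [FiniteDimensional ℝ E] {F : E → ℝ} (hF : IsPosHomogeneousFn F) :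
    ∃ m : ℝ, 0 < m ∧ ∀ x, m * ‖x‖ ≤ F x := by
  have : ProperSpace E := FiniteDimensional.proper ℝ E
  obtain ⟨m, hm, hmin⟩ := (isCompact_sphere (0 : E) 1).exists_forall_le' (a := 0)
    hF.1.continuousOn (fun x hx => hF.2.1 x (ne_zero_of_mem_unit_sphere ⟨x, hx⟩))
  refine ⟨m, hm, fun x => ?_⟩
  rcases eq_or_ne x 0 with rfl | hx
  · simp [hF.map_zero]
  · have hx' : 0 < ‖x‖ := norm_pos_iff.2 hx
    have h1 := hmin (‖x‖⁻¹ • x) (by simp [norm_smul, hx'.ne'])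
    rw [hF.2.2 _ (inv_pos.2 hx'), inv_mul_eq_div, le_div_iff₀ hx'] at h1
    exact h1

lemma isCompact_sublevel [FiniteDimensional ℝ E] {F : E → ℝ} (hF : IsPosHomogeneousFn F) :
    IsCompact {x : E | F x ≤ 1} := by
  have : ProperSpace E := FiniteDimensional.proper ℝ E
  obtain ⟨m, hm, hle⟩ := hF.exists_mul_norm_le
  refine (isCompact_closedBall (0 : E) (1 / m)).of_isClosed_subset
    (isClosed_le hF.1 continuous_const) fun x hx => ?_
  rw [mem_closedBall_zero_iff, le_div_iff₀ hm, mul_comm]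
  exact (hle x).trans hx

lemma sublevel_eq_smul {F : E → ℝ} (hF : IsPosHomogeneousFn F) {r : ℝ} (hr : 0 < r) :
    {x : E | F x ≤ r} = r • {x : E | F x ≤ 1} := by
  ext x
  rw [Set.mem_smul_set_iff_inv_smul_mem₀ hr.ne', mem_ofPred_eq, mem_ofPred_eq,
    hF.2.2 _ (inv_pos.2 hr), inv_mul_le_one₀ hr]

lemma measureReal_sublevel [MeasurableSpace E] [BorelSpace E] {F : E → ℝ}
    (hF : IsPosHomogeneousFn F) {μ : Measure E} {d : ℝ} (hhom : IsHomogeneousMeasure μ d)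
    {r : ℝ} (hr : 0 < r) :
    μ.real {x : E | F x ≤ r} = r ^ d * μ.real {x : E | F x ≤ 1} := by
  rw [hF.sublevel_eq_smul hr, measureReal_def,
    hhom r hr _ (isClosed_le hF.1 continuous_const).measurableSet, ENNReal.toReal_mul,
    ENNReal.toReal_ofReal (Real.rpow_nonneg hr.le d), measureReal_def]

/-- The tail function of `F ^ k` on `{F ≤ 1}` entering the layer cake formula. -/
lemma measureReal_lt_rpow [FiniteDimensional ℝ E] [MeasurableSpace E] [BorelSpace E] {F : E → ℝ}
    (hF : IsPosHomogeneousFn F) {μ : Measure E} [IsFiniteMeasureOnCompacts μ] {d : ℝ}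
    (hhom : IsHomogeneousMeasure μ d) {k : ℝ} (hk : 0 < k) {s : ℝ} (hs : 0 < s) (hs1 : s ≤ 1) :
    (μ.restrict {x : E | F x ≤ 1}).real {x | s < F x ^ k}
      = (1 - s ^ (d / k)) * μ.real {x : E | F x ≤ 1} := by
  have hmeas (r : ℝ) : MeasurableSet {x : E | F x ≤ r} :=
    (isClosed_le hF.1 continuous_const).measurableSet
  have hr : 0 < s ^ k⁻¹ := Real.rpow_pos_of_pos hs _
  have hr1 : s ^ k⁻¹ ≤ 1 := Real.rpow_le_one hs.le hs1 (inv_pos.2 hk).le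
  have hset : {x | s < F x ^ k} ∩ {x : E | F x ≤ 1}
      = {x : E | F x ≤ 1} \ {x : E | F x ≤ s ^ k⁻¹} := by
    ext x
    simp only [mem_inter_iff, mem_ofPred_eq, Set.mem_sdiff, not_le,
      Real.rpow_inv_lt_iff_of_pos hs.le (hF.nonneg x) hk]
    exact and_comm
  have hsub : {x : E | F x ≤ s ^ k⁻¹} ⊆ {x : E | F x ≤ 1} := fun x hx => le_trans hx hr1
  rw [measureReal_restrict_apply' (hmeas 1), hset, measureReal_sdiff hsub (hmeas _)
      (hF.isCompact_sublevel.measure_lt_top.ne),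
    hF.measureReal_sublevel hhom hr, ← Real.rpow_mul hs.le, inv_mul_eq_div]
  ring

end IsPosHomogeneousFn

/-- (Combining equations (3.2) and (3.3) of the paper.) For a
measure `μ` homogeneous of degree `d > 0`, finite on compacts and null at `0`,
and a positive 1-homogeneous function `F`, the set `{F ≤ 1}` has finite
`μ`-measure and `∫_{F ≤ 1} F^k dμ = (d / (d + k)) · μ({F ≤ 1})` for all `k ≥ 0`. -/
theorem integral_pow_eq_measure_mul
    [FiniteDimensional ℝ E] [MeasurableSpace E] [BorelSpace E]
    (d : ℝ) (hd : 0 < d) (μ : Measure E) [IsFiniteMeasureOnCompacts μ]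
    (hzero : μ {(0 : E)} = 0) (hhom : IsHomogeneousMeasure μ d)
    (F : E → ℝ) (hF : IsPosHomogeneousFn F) :
    μ {x : E | F x ≤ 1} < ⊤ ∧
      ∀ k : ℝ, 0 ≤ k →
        ∫ x in {x : E | F x ≤ 1}, F x ^ k ∂μ
          = d / (d + k) * (μ {x : E | F x ≤ 1}).toReal := by
  refine ⟨hF.isCompact_sublevel.measure_lt_top, fun k hk => ?_⟩
  rcases hk.eq_or_lt with rfl | hk
  · simp [hd.ne', measureReal_def]
  have hint : Integrable (fun x => F x ^ k) (μ.restrict {x : E | F x ≤ 1}) :=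
    (hF.1.rpow_const fun _ => Or.inr hk.le).continuousOn.integrableOn_compact
      hF.isCompact_sublevel
  rw [hint.integral_eq_integral_meas_lt
    (Eventually.of_forall fun x => Real.rpow_nonneg (hF.nonneg x) k)]
  -- Above level `1` the tail function vanishes, since `F ^ k ≤ 1` on `{F ≤ 1}`.
  rw [setIntegral_eq_of_subset_of_forall_sdiff_eq_zero measurableSet_Ioi
    (Ioc_subset_Ioi_self : Ioc (0 : ℝ) 1 ⊆ Ioi 0)]
  · rw [setIntegral_congr_fun measurableSet_Ioc
      (fun s hs => hF.measureReal_lt_rpow hhom hk hs.1 hs.2), integral_mul_const,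
      ← intervalIntegral.integral_of_le zero_le_one,
      intervalIntegral.integral_sub intervalIntegrable_const
        (intervalIntegral.intervalIntegrable_rpow' (by linarith [div_pos hd hk])),
      integral_rpow (Or.inl (by linarith [div_pos hd hk])), measureReal_def]
    have h1 : d / k + 1 ≠ 0 := by positivity
    have h2 : d + k ≠ 0 := by positivity
    rw [Real.zero_rpow h1, Real.one_rpow, intervalIntegral.integral_const]
    congr 1
    simp only [sub_zero, smul_eq_mul, mul_one]
    field_simp
    ring
  · rintro s ⟨hs, hs'⟩
    have hs1 : 1 < s := by
      by_contra! h
      exact hs' ⟨hs, h⟩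
    rw [measureReal_restrict_apply' (isClosed_le hF.1 continuous_const).measurableSet]
    convert measureReal_empty
    ext x
    simp only [mem_inter_iff, mem_ofPred_eq, mem_empty_iff_false, iff_false, not_and, not_le]
    intro hx
    by_contra! h
    linarith [Real.rpow_le_one (hF.nonneg x) h hk.le]
end
end

section
/- Let E be a finite-dimensional real normed vector space, d > 0, μ a Borel measure on E that is finite on compact sets, satisfies μ({0}) = 0, and is homogeneous of degree d, F : E → ℝ a positive 1-homogeneous function, C ≥ 0 a real number, and (x_i)_{i ∈ ℕ} a sequence in E such that {i : F(x_i) ≤ R} is finite for every R > 0. Assume that for every continuous function g : E → ℝ with compact support contained in E \ {0}, lim_{L → ∞} L^{−d} Σ_{i ∈ ℕ} g(L^{−1} • x_i) = C · ∫_E g dμ. Then lim_{L → ∞} L^{−(d+1)} Σ_{i : F(x_i) ≤ L} F(x_i) = (d/(d+1)) · C · μ({x : F(x) ≤ 1}). -/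
/-!
The proof compares the sum over one multiplicative annulus `a L < F ≤ L`, with `a < 1` close to `1`,
to the limit measure.

Write `S L = Σ_{F (x i) ≤ L} F (x i)` and `c = C * μ {F ≤ 1}`. Homogeneity gives
`μ {F ≤ r} = r ^ d * μ {F ≤ 1}`, so testing the weak convergence against continuous functions
`φ ∘ F`, with `φ` trapezoidal and close to the indicator of `(a, 1]`, shows that the annulus contains
about `c (1 - a ^ d) L ^ d` points. On it `a L < F ≤ L`, so `S L - S (a L)` lies asymptotically
between `a c (1 - a ^ d) L ^ (d + 1)` and `c (1 - a ^ d) L ^ (d + 1)` (`sum_upper`, `sum_lower`).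

The convergence hypothesis says nothing near the origin, but iterating `L ↦ a L` down to a bounded
scale costs only a constant plus a geometric series of ratio `a ^ (d + 1)`
(`eventually_lt_of_recursion`). Hence `S L / L ^ (d + 1)` is asymptotically between `a q(a)` and
`q(a)`, where `q(a) = c (1 - a ^ d) / (1 - a ^ (d + 1))`, and `q(a) → c d / (d + 1)` as `a → 1`.
-/


open MeasureTheory Set Filter Topology Pointwise

noncomputable section

variable {E : Type*} [NormedAddCommGroup E] [NormedSpace ℝ E]

/-! ### Iterating an inequality between scales -/

/-- A function satisfying `f L ≤ f (a L) + B L ^ p` at large scales is at most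
`B / (1 - a ^ p) * L ^ p` up to lower order terms: unroll the inequality down to a bounded scale and
sum the geometric series. -/
lemma eventually_lt_of_recursion (f : ℝ → ℝ) (p a b B : ℝ) (hp : 0 < p) (ha : 0 < a) (ha1 : a < 1)
    (hbdd : ∀ R : ℝ, 0 < R → ∃ M : ℝ, ∀ L, 0 < L → L ≤ R → f L ≤ M)
    (hrec : ∀ᶠ L in atTop, f L ≤ f (a * L) + B * L ^ p)
    (hB : B < b * (1 - a ^ p)) :
    ∀ᶠ L in atTop, L ^ (-p) * f L < b := by
  obtain ⟨L₁, hL₁⟩ := eventually_atTop.1 hrec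
  set R := max L₁ 1 with hR
  have hR0 : 0 < R := lt_of_lt_of_le one_pos (le_max_right _ _)
  obtain ⟨M, hM⟩ := hbdd R hR0
  have hq : a ^ p < 1 := Real.rpow_lt_one ha.le ha1 hp
  have hq' : 0 < 1 - a ^ p := by linarith
  set D := B / (1 - a ^ p) with hD
  have hDB : D * a ^ p + B = D := by
    have : D * (1 - a ^ p) = B := div_mul_cancel₀ _ hq'.ne'
    linarith
  have hDb : D < b := by rwa [hD, div_lt_iff₀ hq']
  -- The term `|D| * R ^ p` lets the bound hold at scales below `R` even when `D < 0`.
  set K := M + |D| * R ^ p with hK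
  have hstep : ∀ n : ℕ, ∀ L, 0 < L → a ^ n * L ≤ R → f L ≤ K + D * L ^ p := by
    intro n
    have hsmall : ∀ L, 0 < L → L ≤ R → f L ≤ K + D * L ^ p := by
      intro L hL hLR
      have h1 := hM L hL hLR
      have h2 : L ^ p ≤ R ^ p := Real.rpow_le_rpow hL.le hLR hp.le
      have h3 : |D| * L ^ p ≤ |D| * R ^ p := mul_le_mul_of_nonneg_left h2 (abs_nonneg _)
      have h4 : -|D| * L ^ p ≤ D * L ^ p :=
        mul_le_mul_of_nonneg_right (neg_abs_le D) (Real.rpow_nonneg hL.le _)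
      linarith
    induction n with
    | zero => intro L hL h; exact hsmall L hL (by simpa using h)
    | succ n ih =>
      intro L hL h
      rcases le_total L R with hLR | hLR
      · exact hsmall L hL hLR
      · have h1 := hL₁ L ((le_max_left _ _).trans hLR)
        have h2 := ih (a * L) (by positivity) (by rw [← mul_assoc, ← pow_succ]; exact h)
        rw [Real.mul_rpow ha.le hL.le] at h2
        have h3 : D * L ^ p = D * (a ^ p * L ^ p) + B * L ^ p := by
          rw [← mul_assoc, ← add_mul, hDB]
        linarith
  have hall : ∀ L, 0 < L → f L ≤ K + D * L ^ p := by
    intro L hL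
    obtain ⟨n, hn⟩ := exists_pow_lt_of_lt_one (div_pos hR0 hL) ha1
    exact hstep n L hL ((lt_div_iff₀ hL).1 hn).le
  have hlim : Tendsto (fun L : ℝ => K * L ^ (-p) + D) atTop (𝓝 (K * 0 + D)) :=
    ((tendsto_rpow_neg_atTop hp).const_mul K).add_const D
  have hev := hlim.eventually_lt_const (u := b) (by simpa using hDb)
  filter_upwards [hev, eventually_gt_atTop 0] with L h1 hL
  have hpos : 0 < L ^ (-p) := Real.rpow_pos_of_pos hL _
  have hcancel : L ^ (-p) * L ^ p = 1 := by
    rw [← Real.rpow_add hL]; simp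
  calc L ^ (-p) * f L ≤ L ^ (-p) * (K + D * L ^ p) :=
        mul_le_mul_of_nonneg_left (hall L hL) hpos.le
    _ = K * L ^ (-p) + D * (L ^ (-p) * L ^ p) := by ring
    _ < b := by rw [hcancel, mul_one]; exact h1

/-- `(1 - a ^ d) / (1 - a ^ (d + 1)) → d / (d + 1)` as `a → 1`, as a quotient of difference
quotients. -/
lemma tendsto_ratio (d : ℝ) (hd : 0 < d) :
    Tendsto (fun a : ℝ => (1 - a ^ d) / (1 - a ^ (d + 1))) (𝓝[<] 1) (𝓝 (d / (d + 1))) := by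
  have key : ∀ p : ℝ, Tendsto (slope (fun a : ℝ => a ^ p) 1) (𝓝[<] 1) (𝓝 p) := by
    intro p
    have h : HasDerivAt (fun a : ℝ => a ^ p) (p * 1 ^ (p - 1)) 1 :=
      Real.hasDerivAt_rpow_const (Or.inl one_ne_zero)
    rw [Real.one_rpow, mul_one, hasDerivAt_iff_tendsto_slope] at h
    exact h.mono_left (nhdsWithin_mono _ fun a (ha : a < 1) => ha.ne)
  refine ((key d).div (key (d + 1)) (by positivity)).congr' ?_
  filter_upwards [self_mem_nhdsWithin] with a (ha : a < 1)
  have h1 : a - 1 ≠ 0 := by linarith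
  simp only [Pi.div_apply, slope_def_field, Real.one_rpow]
  rw [div_div_div_cancel_right₀ h1, ← neg_sub 1 (a ^ d), ← neg_sub 1 (a ^ (d + 1)), neg_div_neg_eq]

/-! ### Sublevel sets of a positive homogeneous function -/

lemma posHom_zero {F : E → ℝ} (hF : IsPosHomogeneousFn F) : F 0 = 0 := by
  have := hF.2.2 2 two_pos 0
  rw [smul_zero] at this
  linarith

lemma posHom_nonneg {F : E → ℝ} (hF : IsPosHomogeneousFn F) (y : E) : 0 ≤ F y := by
  rcases eq_or_ne y 0 with rfl | h
  · exact (posHom_zero hF).ge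
  · exact (hF.2.1 y h).le

/-- Sublevel sets are compact, because `F` is bounded below by a positive constant on the unit
sphere. -/
lemma isCompact_sublevel [FiniteDimensional ℝ E] {F : E → ℝ} (hF : IsPosHomogeneousFn F) (r : ℝ) :
    IsCompact {y : E | F y ≤ r} := by
  have : ProperSpace E := FiniteDimensional.proper_real E
  have hclosed : IsClosed {y : E | F y ≤ r} := isClosed_le hF.1 continuous_const
  have hnorm : ∀ y : E, y ≠ 0 → (‖y‖⁻¹ • y) ∈ Metric.sphere (0 : E) 1 := by
    intro y hy
    rw [mem_sphere_zero_iff_norm, norm_smul, norm_inv, norm_norm,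
      inv_mul_cancel₀ (norm_ne_zero_iff.2 hy)]
  rcases (Metric.sphere (0 : E) 1).eq_empty_or_nonempty with hs | hs
  · refine (isCompact_closedBall (0 : E) 1).of_isClosed_subset hclosed fun y _ => ?_
    rcases eq_or_ne y 0 with rfl | h
    · simp
    · have := hnorm y h
      rw [hs] at this
      exact this.elim
  · obtain ⟨z, hz, hmin⟩ := (isCompact_sphere (0 : E) 1).exists_isMinOn hs hF.1.continuousOn
    have hz0 : z ≠ 0 := by
      rintro rfl
      simp at hz
    have hc : 0 < F z := hF.2.1 z hz0
    refine (isCompact_closedBall (0 : E) (r / F z)).of_isClosed_subset hclosed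
      fun y (hy : F y ≤ r) => ?_
    rw [mem_closedBall_zero_iff, le_div_iff₀ hc]
    rcases eq_or_ne y 0 with rfl | h
    · simpa [posHom_zero hF] using hy
    · have hy0 : 0 < ‖y‖ := norm_pos_iff.2 h
      have h1 : F z ≤ F (‖y‖⁻¹ • y) := hmin (hnorm y h)
      rw [hF.2.2 _ (inv_pos.2 hy0), ← div_eq_inv_mul, le_div_iff₀ hy0] at h1
      linarith

lemma measure_sublevel [MeasurableSpace E] [BorelSpace E] {μ : Measure E} {d : ℝ}
    (hhom : IsHomogeneousMeasure μ d) {F : E → ℝ} (hF : IsPosHomogeneousFn F) {r : ℝ}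
    (hr : 0 < r) : μ.real {y : E | F y ≤ r} = r ^ d * μ.real {y : E | F y ≤ 1} := by
  have hset : {y : E | F y ≤ r} = r • {y : E | F y ≤ 1} := by
    ext y
    rw [Set.mem_smul_set_iff_inv_smul_mem₀ hr.ne', mem_ofPred_eq, mem_ofPred_eq,
      hF.2.2 _ (inv_pos.2 hr), ← div_eq_inv_mul, div_le_one hr]
  rw [hset, Measure.real, hhom r hr _ (isClosed_le hF.1 continuous_const).measurableSet,
    ENNReal.toReal_mul, ENNReal.toReal_ofReal (Real.rpow_nonneg hr.le _), Measure.real]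

lemma measure_annulus [FiniteDimensional ℝ E] [MeasurableSpace E] [BorelSpace E] {μ : Measure E}
    [IsFiniteMeasureOnCompacts μ] {d : ℝ} (hhom : IsHomogeneousMeasure μ d) {F : E → ℝ}
    (hF : IsPosHomogeneousFn F) {u v : ℝ} (hu : 0 < u) (huv : u ≤ v) :
    μ.real {y : E | u < F y ∧ F y ≤ v} = (v ^ d - u ^ d) * μ.real {y : E | F y ≤ 1} := by
  have hset : {y : E | u < F y ∧ F y ≤ v} = {y : E | F y ≤ v} \ {y : E | F y ≤ u} := by
    ext y
    simp [and_comm]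
  have hss : {y : E | F y ≤ u} ⊆ {y : E | F y ≤ v} := fun y (hy : F y ≤ u) => hy.trans huv
  rw [hset, measureReal_sdiff hss
    (isClosed_le hF.1 continuous_const).measurableSet (isCompact_sublevel hF v).measure_lt_top.ne,
    measure_sublevel hhom hF hu, measure_sublevel hhom hF (hu.trans_le huv), sub_mul]

/-! ### Counting points in annuli -/

/-- Weak convergence tested against a continuous function of `F` that interpolates between the
indicators of the annuli `(u', v']` and `(u, v]`. The value `C * I` is the limiting count. -/
lemma exists_test [FiniteDimensional ℝ E] [MeasurableSpace E] [BorelSpace E] {d : ℝ}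
    {μ : Measure E} [IsFiniteMeasureOnCompacts μ] (hhom : IsHomogeneousMeasure μ d)
    {F : E → ℝ} (hF : IsPosHomogeneousFn F) {C : ℝ} {x : ℕ → E}
    (hconv : ∀ g : E → ℝ, Continuous g → HasCompactSupport g →
      tsupport g ⊆ {(0 : E)}ᶜ →
      Tendsto (fun L : ℝ => L ^ (-d) * ∑' i : ℕ, g (L⁻¹ • x i)) atTop
        (𝓝 (C * ∫ y, g y ∂μ)))
    {u u' v' v : ℝ} (hu : 0 < u) (huu : u < u') (huv : u' ≤ v') (hvv : v' < v) :
    ∃ (φ : ℝ → ℝ) (I : ℝ), (∀ t, 0 ≤ φ t) ∧ (∀ t, φ t ≤ 1) ∧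
      (∀ t, u' ≤ t → t ≤ v' → φ t = 1) ∧ (∀ t, t ≤ u ∨ v ≤ t → φ t = 0) ∧
      (v' ^ d - u' ^ d) * μ.real {y : E | F y ≤ 1} ≤ I ∧
      I ≤ (v ^ d - u ^ d) * μ.real {y : E | F y ≤ 1} ∧
      Tendsto (fun L : ℝ => L ^ (-d) * ∑' i : ℕ, φ (F (x i) / L)) atTop (𝓝 (C * I)) := by
  set φ : ℝ → ℝ := fun t => max 0 (min 1 (min ((t - u) / (u' - u)) ((v - t) / (v - v')))) with hφ
  have hcont : Continuous φ := by
    rw [hφ]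
    fun_prop
  have h0 : ∀ t, 0 ≤ φ t := fun t => le_max_left _ _
  have h1 : ∀ t, φ t ≤ 1 := fun t => max_le zero_le_one (min_le_left _ _)
  have hone : ∀ t, u' ≤ t → t ≤ v' → φ t = 1 := by
    intro t h2 h3
    have h4 : 1 ≤ (t - u) / (u' - u) := by rw [le_div_iff₀ (by linarith)]; linarith
    have h5 : 1 ≤ (v - t) / (v - v') := by rw [le_div_iff₀ (by linarith)]; linarith
    simp only [hφ]
    rw [min_eq_left (le_min h4 h5), max_eq_right zero_le_one]
  have hzero : ∀ t, t ≤ u ∨ v ≤ t → φ t = 0 := by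
    intro t ht
    refine max_eq_left ((min_le_right _ _).trans ?_)
    rcases ht with ht | ht
    · exact (min_le_left _ _).trans (div_nonpos_of_nonpos_of_nonneg (by linarith) (by linarith))
    · exact (min_le_right _ _).trans (div_nonpos_of_nonpos_of_nonneg (by linarith) (by linarith))
  have hgc : Continuous fun y => φ (F y) := hcont.comp hF.1
  have hsub : tsupport (fun y => φ (F y)) ⊆ {y | u ≤ F y ∧ F y ≤ v} := by
    refine closure_minimal (fun y hy => ?_)
      ((isClosed_le continuous_const hF.1).inter (isClosed_le hF.1 continuous_const))
    by_contra hcon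
    refine hy (hzero _ ?_)
    by_contra! hcon2
    exact hcon ⟨hcon2.1.le, hcon2.2.le⟩
  have hcs : HasCompactSupport fun y => φ (F y) :=
    (isCompact_sublevel hF v).of_isClosed_subset (isClosed_tsupport _) fun y hy => (hsub hy).2
  have hav : tsupport (fun y => φ (F y)) ⊆ {(0 : E)}ᶜ := by
    rintro y hy (rfl : y = 0)
    have := (hsub hy).1
    rw [posHom_zero hF] at this
    linarith
  have hmeas : ∀ s t : ℝ, MeasurableSet {y : E | s < F y ∧ F y ≤ t} := fun s t =>
    (isOpen_lt continuous_const hF.1).measurableSet.inter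
      (isClosed_le hF.1 continuous_const).measurableSet
  have hind : ∀ s t : ℝ, Integrable ({y : E | s < F y ∧ F y ≤ t}.indicator fun _ => (1 : ℝ)) μ := by
    intro s t
    refine (integrable_indicator_iff (hmeas s t)).2 (integrableOn_const ?_)
    exact ((measure_mono fun y (hy : s < F y ∧ F y ≤ t) => hy.2).trans_lt
      (isCompact_sublevel hF t).measure_lt_top).ne
  have hint : Integrable (fun y => φ (F y)) μ := hgc.integrable_of_hasCompactSupport hcs
  refine ⟨φ, ∫ y, φ (F y) ∂μ, h0, h1, hone, hzero, ?_, ?_, ?_⟩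
  · rw [← measure_annulus hhom hF (hu.trans huu) huv, ← integral_indicator_one (hmeas _ _)]
    refine integral_mono (hind _ _) hint fun y => ?_
    refine Set.indicator_le' (fun y hy => ?_) (fun y _ => h0 _) y
    exact (hone _ hy.1.le hy.2).ge
  · rw [← measure_annulus hhom hF hu (by linarith), ← integral_indicator_one (hmeas _ _)]
    refine integral_mono hint (hind _ _) fun y => ?_
    refine Set.le_indicator (f := fun y => φ (F y)) (fun y _ => h1 _) (fun y hy => ?_) y
    refine (hzero _ ?_).le
    by_contra! hcon
    exact hy ⟨hcon.1, hcon.2.le⟩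
  · refine (hconv _ hgc hcs hav).congr' ?_
    filter_upwards [eventually_gt_atTop 0] with L hL
    congr 1
    refine tsum_congr fun i => ?_
    rw [hF.2.2 _ (inv_pos.2 hL), ← div_eq_inv_mul]

/-! ### The sum over one annulus -/

/-- The total mass `Σ_{F (x i) ≤ L} F (x i)`. -/
def totalMass (F : E → ℝ) (x : ℕ → E) (L : ℝ) : ℝ :=
  ∑' i : ℕ, if F (x i) ≤ L then F (x i) else 0

section totalMass

variable {F : E → ℝ} {x : ℕ → E}

lemma summable_of_vanish (hfin : ∀ R : ℝ, 0 < R → {i : ℕ | F (x i) ≤ R}.Finite) {f : ℕ → ℝ}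
    {R : ℝ} (hR : 0 < R) (hf : ∀ i, R < F (x i) → f i = 0) : Summable f := by
  refine summable_of_hasFiniteSupport ((hfin R hR).subset fun i hi => ?_)
  by_contra hcon
  exact hi (hf i (not_le.1 hcon))

lemma summable_totalMass (hfin : ∀ R : ℝ, 0 < R → {i : ℕ | F (x i) ≤ R}.Finite) {L : ℝ}
    (hL : 0 < L) : Summable fun i : ℕ => if F (x i) ≤ L then F (x i) else 0 :=
  summable_of_vanish hfin hL fun _ hi => if_neg (not_le.2 hi)

lemma totalMass_nonneg (hF : IsPosHomogeneousFn F) (L : ℝ) : 0 ≤ totalMass F x L := by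
  refine tsum_nonneg fun i => ?_
  split_ifs
  · exact posHom_nonneg hF _
  · exact le_rfl

lemma totalMass_mono (hF : IsPosHomogeneousFn F)
    (hfin : ∀ R : ℝ, 0 < R → {i : ℕ | F (x i) ≤ R}.Finite) {L R : ℝ} (hL : 0 < L) (hLR : L ≤ R) :
    totalMass F x L ≤ totalMass F x R := by
  refine Summable.tsum_le_tsum (fun i => ?_) (summable_totalMass hfin hL)
    (summable_totalMass hfin (hL.trans_le hLR))
  have := posHom_nonneg hF (x i)
  split_ifs <;> linarith

/-- Each of the asymptotically at most `C (1 - a ^ d) μ {F ≤ 1} L ^ d` points with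
`a L < F ≤ L` contributes at most `L`. -/
lemma sum_upper [FiniteDimensional ℝ E] [MeasurableSpace E] [BorelSpace E] {d : ℝ} (hd : 0 < d)
    {μ : Measure E} [IsFiniteMeasureOnCompacts μ] (hhom : IsHomogeneousMeasure μ d)
    (hF : IsPosHomogeneousFn F) {C : ℝ} (hC : 0 ≤ C)
    (hfin : ∀ R : ℝ, 0 < R → {i : ℕ | F (x i) ≤ R}.Finite)
    (hconv : ∀ g : E → ℝ, Continuous g → HasCompactSupport g →
      tsupport g ⊆ {(0 : E)}ᶜ →
      Tendsto (fun L : ℝ => L ^ (-d) * ∑' i : ℕ, g (L⁻¹ • x i)) atTop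
        (𝓝 (C * ∫ y, g y ∂μ)))
    {a B : ℝ} (ha : 0 < a) (ha1 : a < 1)
    (hB : C * ((1 - a ^ d) * μ.real {y : E | F y ≤ 1}) < B) :
    ∀ᶠ L in atTop, totalMass F x L ≤ totalMass F x (a * L) + B * L ^ (d + 1) := by
  -- Slightly enlarge the annulus `(a, 1]` to `(a - η, 1 + η]`.
  have hη : ∃ η : ℝ, 0 < η ∧ η < a ∧
      C * (((1 + η) ^ d - (a - η) ^ d) * μ.real {y : E | F y ≤ 1}) < B := by
    have hc : Continuous fun η : ℝ =>
        C * (((1 + η) ^ d - (a - η) ^ d) * μ.real {y : E | F y ≤ 1}) := by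
      have h1 : Continuous fun η : ℝ => (1 + η) ^ d :=
        (by fun_prop : Continuous fun η : ℝ => 1 + η).rpow_const fun _ => Or.inr hd.le
      have h2 : Continuous fun η : ℝ => (a - η) ^ d :=
        (by fun_prop : Continuous fun η : ℝ => a - η).rpow_const fun _ => Or.inr hd.le
      fun_prop
    have h3 := (hc.tendsto 0).eventually_lt_const (u := B) (by simpa using hB)
    have h4 := (h3.filter_mono (nhdsWithin_le_nhds (s := Ioi 0))).and (Ioo_mem_nhdsGT ha)
    obtain ⟨η, h5, h6⟩ := h4.exists
    exact ⟨η, h6.1, h6.2, h5⟩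
  obtain ⟨η, hη0, hηa, hηB⟩ := hη
  obtain ⟨φ, I, h0, h1, hone, hzero, -, hI, hlim⟩ := exists_test hhom hF hconv
    (u := a - η) (u' := a) (v' := 1) (v := 1 + η) (by linarith) (by linarith) ha1.le (by linarith)
  have hCI : C * I < B := (mul_le_mul_of_nonneg_left hI hC).trans_lt hηB
  filter_upwards [hlim.eventually_lt_const hCI, eventually_gt_atTop 0] with L hL1 hL
  have hsφ : Summable fun i => φ (F (x i) / L) := by
    refine summable_of_vanish hfin (R := (1 + η) * L) (by positivity) fun i hi => ?_
    exact hzero _ (Or.inr ((le_div_iff₀ hL).2 hi.le))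
  have hs1 := summable_totalMass hfin (mul_pos ha hL)
  have hle : totalMass F x L ≤ totalMass F x (a * L) + L * ∑' i, φ (F (x i) / L) := by
    rw [totalMass, totalMass, ← tsum_mul_left, ← hs1.tsum_add (hsφ.mul_left L)]
    refine Summable.tsum_le_tsum (fun i => ?_) (summable_totalMass hfin hL)
      (hs1.add (hsφ.mul_left L))
    have hn := posHom_nonneg hF (x i)
    have hφn : 0 ≤ L * φ (F (x i) / L) := mul_nonneg hL.le (h0 _)
    split_ifs with h3 h4 h4
    · linarith
    · rw [hone _ ((le_div_iff₀ hL).2 (not_le.1 h4).le) ((div_le_one hL).2 h3)]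
      linarith
    · linarith
    · linarith
  have hsum : ∑' i, φ (F (x i) / L) ≤ B * L ^ d := by
    rw [Real.rpow_neg hL.le, ← div_eq_inv_mul, div_lt_iff₀ (Real.rpow_pos_of_pos hL _)] at hL1
    exact hL1.le
  rw [Real.rpow_add hL, Real.rpow_one]
  nlinarith [mul_le_mul_of_nonneg_left hsum hL.le]

/-- Each of the asymptotically at least `C (1 - a ^ d) μ {F ≤ 1} L ^ d` points with
`a L < F ≤ L` contributes at least `a L`. -/
lemma sum_lower [FiniteDimensional ℝ E] [MeasurableSpace E] [BorelSpace E] {d : ℝ} (hd : 0 < d)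
    {μ : Measure E} [IsFiniteMeasureOnCompacts μ] (hhom : IsHomogeneousMeasure μ d)
    (hF : IsPosHomogeneousFn F) {C : ℝ} (hC : 0 ≤ C)
    (hfin : ∀ R : ℝ, 0 < R → {i : ℕ | F (x i) ≤ R}.Finite)
    (hconv : ∀ g : E → ℝ, Continuous g → HasCompactSupport g →
      tsupport g ⊆ {(0 : E)}ᶜ →
      Tendsto (fun L : ℝ => L ^ (-d) * ∑' i : ℕ, g (L⁻¹ • x i)) atTop
        (𝓝 (C * ∫ y, g y ∂μ)))
    {a B : ℝ} (ha : 0 < a) (ha1 : a < 1)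
    (hB : B < a * (C * ((1 - a ^ d) * μ.real {y : E | F y ≤ 1}))) :
    ∀ᶠ L in atTop, totalMass F x (a * L) + B * L ^ (d + 1) ≤ totalMass F x L := by
  -- Slightly shrink the annulus `(a, 1]` to `(a + η, 1 - η]`.
  have hη : ∃ η : ℝ, 0 < η ∧ η < (1 - a) / 2 ∧
      B < a * (C * (((1 - η) ^ d - (a + η) ^ d) * μ.real {y : E | F y ≤ 1})) := by
    have hc : Continuous fun η : ℝ =>
        a * (C * (((1 - η) ^ d - (a + η) ^ d) * μ.real {y : E | F y ≤ 1})) := by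
      have h1 : Continuous fun η : ℝ => (1 - η) ^ d :=
        (by fun_prop : Continuous fun η : ℝ => 1 - η).rpow_const fun _ => Or.inr hd.le
      have h2 : Continuous fun η : ℝ => (a + η) ^ d :=
        (by fun_prop : Continuous fun η : ℝ => a + η).rpow_const fun _ => Or.inr hd.le
      fun_prop
    have h3 := (hc.tendsto 0).eventually_const_lt (u := B) (by simpa using hB)
    have h4 := (h3.filter_mono (nhdsWithin_le_nhds (s := Ioi 0))).and
      (Ioo_mem_nhdsGT (show (0 : ℝ) < (1 - a) / 2 by linarith))
    obtain ⟨η, h5, h6⟩ := h4.exists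
    exact ⟨η, h6.1, h6.2, h5⟩
  obtain ⟨η, hη0, hηa, hηB⟩ := hη
  obtain ⟨φ, I, h0, h1, hone, hzero, hI, -, hlim⟩ := exists_test hhom hF hconv
    (u := a) (u' := a + η) (v' := 1 - η) (v := 1) ha (by linarith) (by linarith) (by linarith)
  have hCI : B < a * (C * I) := hηB.trans_le
    (mul_le_mul_of_nonneg_left (mul_le_mul_of_nonneg_left hI hC) ha.le)
  filter_upwards [(hlim.const_mul a).eventually_const_lt hCI, eventually_gt_atTop 0] with L hL1 hL
  have hsφ : Summable fun i => φ (F (x i) / L) := by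
    refine summable_of_vanish hfin hL fun i hi => ?_
    exact hzero _ (Or.inr ((one_le_div hL).2 hi.le))
  have hs1 := summable_totalMass hfin (mul_pos ha hL)
  have hle : totalMass F x (a * L) + a * L * ∑' i, φ (F (x i) / L) ≤ totalMass F x L := by
    rw [totalMass, totalMass, ← tsum_mul_left, ← hs1.tsum_add (hsφ.mul_left (a * L))]
    refine Summable.tsum_le_tsum (fun i => ?_) (hs1.add (hsφ.mul_left (a * L)))
      (summable_totalMass hfin hL)
    have haL : a * L ≤ L := by nlinarith
    by_cases h3 : F (x i) ≤ a * L
    · rw [if_pos h3, if_pos (h3.trans haL), hzero _ (Or.inl ((div_le_iff₀ hL).2 h3))]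
      simp
    · rw [if_neg h3]
      split_ifs with h4
      · have := mul_le_mul_of_nonneg_left (h1 (F (x i) / L)) (mul_pos ha hL).le
        linarith [not_le.1 h3]
      · rw [hzero _ (Or.inr ((one_le_div hL).2 (not_le.1 h4).le))]
        simp
  have hsum : B * L ^ d ≤ a * ∑' i, φ (F (x i) / L) := by
    rw [Real.rpow_neg hL.le, ← div_eq_inv_mul, ← mul_div_assoc,
      lt_div_iff₀ (Real.rpow_pos_of_pos hL _)] at hL1
    exact hL1.le
  rw [Real.rpow_add hL, Real.rpow_one]
  nlinarith [mul_le_mul_of_nonneg_left hsum hL.le]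

end totalMass

/-- (Abstract form of Lemma 4.1 of the paper.) Suppose the
rescaled counting measures `L^{-d} Σ_i δ_{x_i / L}` converge weakly-* on
`E \ {0}` to `C · μ`, where `μ` is homogeneous of degree `d > 0`, finite on
compacts and null at `0`. Then
`L^{-(d+1)} Σ_{F(x_i) ≤ L} F(x_i) → (d/(d+1)) · C · μ({F ≤ 1})`. -/
theorem total_mass_asymptotics
    [FiniteDimensional ℝ E] [MeasurableSpace E] [BorelSpace E]
    (d : ℝ) (hd : 0 < d) (μ : Measure E) [IsFiniteMeasureOnCompacts μ]
    (hzero : μ {(0 : E)} = 0) (hhom : IsHomogeneousMeasure μ d)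
    (F : E → ℝ) (hF : IsPosHomogeneousFn F)
    (C : ℝ) (hC : 0 ≤ C) (x : ℕ → E)
    (hfin : ∀ R : ℝ, 0 < R → {i : ℕ | F (x i) ≤ R}.Finite)
    (hconv : ∀ g : E → ℝ, Continuous g → HasCompactSupport g →
      tsupport g ⊆ {(0 : E)}ᶜ →
      Tendsto (fun L : ℝ => L ^ (-d) * ∑' i : ℕ, g (L⁻¹ • x i)) atTop
        (𝓝 (C * ∫ y, g y ∂μ))) :
    Tendsto
      (fun L : ℝ => L ^ (-(d + 1)) * ∑' i : ℕ, if F (x i) ≤ L then F (x i) else 0)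
      atTop (𝓝 (d / (d + 1) * C * (μ {x : E | F x ≤ 1}).toReal)) := by
  set m := μ.real {y : E | F y ≤ 1} with hm
  have hp : 0 < d + 1 := by linarith
  change Tendsto (fun L : ℝ => L ^ (-(d + 1)) * totalMass F x L) atTop
    (𝓝 (d / (d + 1) * C * m))
  have hunit : ∀ᶠ a : ℝ in 𝓝[<] 1, 0 < a ∧ a < 1 := Ioo_mem_nhdsLT one_pos
  have hratio := (tendsto_ratio d hd).mul_const (C * m)
  rw [← mul_assoc] at hratio
  refine tendsto_order.2 ⟨fun b hb => ?_, fun b hb => ?_⟩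
  · have hid : Tendsto (fun a : ℝ => a) (𝓝[<] 1) (𝓝 1) := nhdsWithin_le_nhds
    have hlow := hid.mul hratio
    rw [one_mul] at hlow
    obtain ⟨a, hab, ha, ha1⟩ := ((hlow.eventually_const_lt hb).and hunit).exists
    have hq : 0 < 1 - a ^ (d + 1) := by linarith [Real.rpow_lt_one ha.le ha1 hp]
    have hlt : b * (1 - a ^ (d + 1)) < a * (C * ((1 - a ^ d) * m)) := by
      rw [← lt_div_iff₀ hq]
      convert hab using 1
      ring
    obtain ⟨B, hB1, hB2⟩ := exists_between hlt
    have hrec := sum_lower hd hhom hF hC hfin hconv ha ha1 hB2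
    have := eventually_lt_of_recursion (fun L => -totalMass F x L) (d + 1) a (-b) (-B) hp ha ha1
      (fun R _ => ⟨0, fun L _ _ => neg_nonpos.2 (totalMass_nonneg hF L)⟩)
      (hrec.mono fun L hL => by linarith) (by linarith)
    filter_upwards [this] with L hL
    linarith
  · obtain ⟨a, hab, ha, ha1⟩ := ((hratio.eventually_lt_const hb).and hunit).exists
    have hq : 0 < 1 - a ^ (d + 1) := by linarith [Real.rpow_lt_one ha.le ha1 hp]
    have hlt : C * ((1 - a ^ d) * m) < b * (1 - a ^ (d + 1)) := by
      rw [← div_lt_iff₀ hq]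
      convert hab using 1
      ring
    obtain ⟨B, hB1, hB2⟩ := exists_between hlt
    exact eventually_lt_of_recursion (totalMass F x) (d + 1) a b B hp ha ha1
      (fun R _ => ⟨totalMass F x R, fun L hL hLR => totalMass_mono hF hfin hL hLR⟩)
      (sum_upper hd hhom hF hC hfin hconv ha ha1 hB1) hB2
end
end
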